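/- Fix a constant $\epsilon$ with $0 < \epsilon < 1$. For each $m \geq 1$ let $B_1, \ldots, B_m$ be independent Bernoulli random variables with $\Pr(B_k = 1) = 1/k$, and set $X = B_1 + \cdots + B_m$. Then there is a constant $K > 0$ such that for all $m \geq 2$, $\Pr\bigl(X > (1 + \epsilon) \ln m\bigr) \leq K\, m^{-\epsilon^2/2 + \epsilon^3/6}$. -/

import Mathlib

open MeasureTheory ProbabilityTheory

lemma aux_log (x : ℝ) (hx : 0 ≤ x) :
    x + x ^ 2 / 2 - x ^ 3 / 6 ≤ (1 + x) * Real.log (1 + x) := by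
  let f : ℝ → ℝ := fun x => (1 + x) * Real.log (1 + x) - (x + x ^ 2 / 2 - x ^ 3 / 6)
  have hd : ∀ y : ℝ, 0 ≤ y →
      HasDerivAt f (Real.log (1 + y) - (y - y ^ 2 / 2)) y := by
    intro y hy
    have h1 : HasDerivAt (fun z : ℝ => 1 + z) 1 y := (hasDerivAt_id y).const_add 1
    have h2 := h1.mul (h1.log (by positivity))
    have h3 := (((hasDerivAt_id y).add ((hasDerivAt_pow 2 y).div_const 2)).sub
      ((hasDerivAt_pow 3 y).div_const 6))
    refine (h2.sub h3).congr_deriv ?_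
    have : (1 + y) ≠ 0 := by positivity
    field_simp
    norm_num
    ring
  have hm : MonotoneOn f (Set.Ici 0) := by
    apply monotoneOn_of_deriv_nonneg (convex_Ici 0)
    · intro y hy
      exact (hd y hy).continuousAt.continuousWithinAt
    · intro y hy
      rw [interior_Ici] at hy
      exact (hd y (le_of_lt hy)).differentiableAt.differentiableWithinAt
    · intro y hy
      rw [interior_Ici] at hy
      have hy' : 0 < y := hy
      rw [(hd y hy'.le).deriv]
      have h := Real.le_log_one_add_of_nonneg hy'.le
      have : y - y ^ 2 / 2 ≤ 2 * y / (y + 2) := by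
        rw [le_div_iff₀ (by positivity)]
        nlinarith [pow_pos hy' 3]
      linarith
  have h := hm (Set.mem_Ici.2 le_rfl) (Set.mem_Ici.2 hx) hx
  simp [f] at h
  linarith

lemma aux_mgf {Ω : Type*} [MeasurableSpace Ω] (μ : Measure Ω) [IsProbabilityMeasure μ]
    (b : Ω → Bool) (hb : Measurable b) (ε : ℝ) (hε : 0 < ε) :
    Integrable (fun ω => Real.exp (Real.log (1 + ε) * (if b ω then (1 : ℝ) else 0))) μ ∧
    mgf (fun ω => if b ω then (1 : ℝ) else 0) μ (Real.log (1 + ε))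
      = 1 + ε * (μ {ω | b ω = true}).toReal := by
  have hS : MeasurableSet {ω | b ω = true} := hb (measurableSet_singleton true)
  have heq : (fun ω => Real.exp (Real.log (1 + ε) * (if b ω then (1 : ℝ) else 0)))
      = fun ω => 1 + Set.indicator {ω | b ω = true} (fun _ => ε) ω := by
    funext ω
    by_cases h : b ω = true
    · simp [h, Real.exp_log (by positivity : 0 < 1 + ε)]
    · simp [h]
  have hi : Integrable (Set.indicator {ω | b ω = true} (fun _ => ε)) μ :=
    (integrable_const ε).indicator hS
  refine ⟨?_, ?_⟩
  · rw [heq]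
    exact (integrable_const 1).add hi
  · unfold mgf
    rw [heq, integral_add (integrable_const 1) hi, integral_indicator_const _ hS]
    simp [Measure.real, mul_comm]

/-- **Lemma 10, second estimate.** Fix `0 < ε < 1`.  For each `m` let
`B 1, …, B m` be independent Bernoulli random variables with `Pr(B k = 1) = 1/k`
and let `X = B 1 + ⋯ + B m`.  Then there is a constant `K > 0` such that for all
`m ≥ 2`, `Pr(X > (1 + ε) ln m) ≤ K m^(-ε²/2 + ε³/6)`. -/
theorem lemma10_second_estimate
    (ε : ℝ) (hε0 : 0 < ε) (hε1 : ε < 1)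
    (Ω : ℕ → Type*) [∀ m, MeasurableSpace (Ω m)]
    (μ : ∀ m, Measure (Ω m)) [∀ m, IsProbabilityMeasure (μ m)]
    (B : ∀ m, Fin m → Ω m → Bool)
    (hmeas : ∀ m k, Measurable (B m k))
    (hindep : ∀ m, iIndepFun (B m) (μ m))
    (hbern : ∀ m, ∀ k : Fin m, ((μ m) {ω | B m k ω = true}).toReal = 1 / ((k : ℕ) + 1)) :
    ∃ K : ℝ, 0 < K ∧ ∀ m : ℕ, 2 ≤ m →
      ((μ m) {ω | (1 + ε) * Real.log m <
          ((∑ k : Fin m, if B m k ω then 1 else 0 : ℕ) : ℝ)}).toReal ≤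
        K * (m : ℝ) ^ (-(ε ^ 2 / 2) + ε ^ 3 / 6) := by
  refine ⟨Real.exp ε, Real.exp_pos _, fun m hm => ?_⟩
  have hm0 : (0 : ℝ) < m := by positivity
  have hlm : 0 ≤ Real.log m := Real.log_natCast_nonneg m
  set t := Real.log (1 + ε) with ht
  have ht0 : 0 ≤ t := Real.log_nonneg (by linarith)
  let Y : Fin m → Ω m → ℝ := fun k ω => if B m k ω then (1 : ℝ) else 0
  have hYm : ∀ k, Measurable (Y k) := fun k =>
    (measurable_of_finite (fun b : Bool => if b then (1 : ℝ) else 0)).comp (hmeas m k)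
  have hYi : iIndepFun Y (μ m) :=
    (hindep m).comp (fun _ b => if b then (1 : ℝ) else 0) (fun _ => measurable_of_finite _)
  have hmgf := hYi.mgf_sum (t := t) hYm Finset.univ
  have hint : Integrable (fun ω => Real.exp (t * (∑ k, Y k) ω)) (μ m) :=
    hYi.integrable_exp_mul_sum hYm (s := Finset.univ)
      (fun k _ => (aux_mgf (μ m) (B m k) (hmeas m k) ε hε0).1)
  have hch := measure_ge_le_exp_mul_mgf ((1 + ε) * Real.log m) ht0 hint
  have hb : mgf (∑ k, Y k) (μ m) t ≤ Real.exp (ε * (1 + Real.log m)) := by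
    rw [hmgf]
    calc ∏ k : Fin m, mgf (Y k) (μ m) t
        ≤ ∏ k : Fin m, Real.exp (ε * (((k : ℕ) : ℝ) + 1)⁻¹) := by
          apply Finset.prod_le_prod
          · intro k _
            exact mgf_nonneg
          · intro k _
            have h := (aux_mgf (μ m) (B m k) (hmeas m k) ε hε0).2
            rw [hbern m k, one_div] at h
            have h2 := Real.add_one_le_exp (ε * (((k : ℕ) : ℝ) + 1)⁻¹)
            refine le_trans (le_of_eq h) ?_
            linarith
      _ = Real.exp (ε * ∑ k ∈ Finset.range m, ((k : ℝ) + 1)⁻¹) := by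
          rw [← Real.exp_sum, ← Finset.mul_sum,
            Fin.sum_univ_eq_sum_range (fun k : ℕ => ((k : ℝ) + 1)⁻¹) m]
      _ ≤ _ := by
          have h := harmonic_le_one_add_log m
          simp only [harmonic] at h
          push_cast at h
          gcongr
  have hsub : ((μ m) {ω | (1 + ε) * Real.log m <
          ((∑ k : Fin m, if B m k ω then 1 else 0 : ℕ) : ℝ)}).toReal
      ≤ (μ m).real {ω | (1 + ε) * Real.log m ≤ (∑ k, Y k) ω} := by
    refine measureReal_mono ?_ (measure_ne_top _ _)
    intro ω hω
    simp only [Set.mem_ofPred_eq] at hω ⊢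
    push_cast at hω
    rw [Finset.sum_apply]
    exact hω.le
  refine hsub.trans (hch.trans ?_)
  refine (mul_le_mul_of_nonneg_left hb (Real.exp_pos _).le).trans ?_
  rw [Real.rpow_def_of_pos hm0, ← Real.exp_add, ← Real.exp_add]
  apply Real.exp_le_exp.2
  have := mul_le_mul_of_nonneg_right (aux_log ε hε0.le) hlm
  rw [← ht] at this
  nlinarith
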